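/- arXiv:2504.01898 — 3 statements merged into one kernel-verified Lean document; each statement's English description precedes it below -/
import Mathlib

section
/- Equivalence of momentum and iterate averaging: let (g_t)_{t≥0} be any sequence of vectors in ℝ^d, let (γ_t, β_t) and (η_t, λ_t) be positive parameter sequences satisfying β_t = (λ_t/(1 + λ_t))·(η_{t−1}/η_t) and γ_t = η_t/(1 + λ_{t+1}) for all t ≥ 0. Then the iterates (x_t) generated by the momentum recursion m_t = β_t m_{t−1} + g_t, x_{t+1} = x_t − γ_t m_t with m_{−1} = 0 coincide, for every t, with the iterates generated by the iterate-averaging recursion z_t = z_{t−1} − η_t g_t, x_{t+1} = (λ_{t+1}/(1 + λ_{t+1}))x_t + (1/(1 + λ_{t+1}))z_t with z_{−1} = x_0 (started from the same x_0); moreover z_t = x_t − (1 + λ_{t+1})γ_t m_t for all t ≥ 0. -/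
/-- **Momentum = iterate averaging.** Given any sequence of vectors `g_t`, positive
parameters `(γ_t, β_t)` and `(η_t, λ_t)` linked by `β_t = (λ_t/(1+λ_t)) (η_{t−1}/η_t)`
and `γ_t = η_t/(1+λ_{t+1})`, the momentum iterates `m_t = β_t m_{t−1} + g_t`,
`x_{t+1} = x_t − γ_t m_t` (with `m_{−1} = 0`) coincide with the iterate-averaging
iterates `z_t = z_{t−1} − η_t g_t`, `x_{t+1} = (λ_{t+1} x_t + z_t)/(1+λ_{t+1})`
(with `z_{−1} = x_0`), and moreover `z_t = x_t − (1+λ_{t+1}) γ_t m_t` for all `t`. -/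
theorem momentum_eq_iterate_averaging
    {d : ℕ} (g : ℕ → EuclideanSpace ℝ (Fin d))
    (γ β η lam : ℕ → ℝ)
    (hη : ∀ t, 0 < η t) (hlam : ∀ t, 0 ≤ lam t)
    (hβ : ∀ t, β (t + 1) = (lam (t + 1) / (1 + lam (t + 1))) * (η t / η (t + 1)))
    (hγ : ∀ t, γ t = η t / (1 + lam (t + 1)))
    (x0 : EuclideanSpace ℝ (Fin d))
    -- momentum iterates, with m₋₁ = 0 (so m₀ = g₀)
    (m x : ℕ → EuclideanSpace ℝ (Fin d))
    (hm0 : m 0 = g 0)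
    (hm : ∀ t, m (t + 1) = β (t + 1) • m t + g (t + 1))
    (hx0 : x 0 = x0)
    (hx : ∀ t, x (t + 1) = x t - γ t • m t)
    -- iterate-averaging iterates, with z₋₁ = x₀ (so z₀ = x₀ − η₀ g₀)
    (z y : ℕ → EuclideanSpace ℝ (Fin d))
    (hz0 : z 0 = x0 - η 0 • g 0)
    (hz : ∀ t, z (t + 1) = z t - η (t + 1) • g (t + 1))
    (hy0 : y 0 = x0)
    (hy : ∀ t, y (t + 1) =
      (lam (t + 1) / (1 + lam (t + 1))) • y t + (1 / (1 + lam (t + 1))) • z t) :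
    (∀ t, y t = x t) ∧ (∀ t, z t = x t - ((1 + lam (t + 1)) * γ t) • m t) := by
  have hpos : ∀ t, 1 + lam t ≠ 0 := fun t => by
    have := hlam t
    positivity
  have hc : ∀ t, (1 + lam (t + 1)) * γ t = η t := fun t => by
    rw [hγ t]
    exact mul_div_cancel₀ _ (hpos (t + 1))
  have hz' : ∀ t, z t = x t - η t • m t := by
    intro t
    induction t with
    | zero => rw [hz0, hx0, hm0]
    | succ t ih =>
      have e : η t = γ t + η (t + 1) * β (t + 1) := by
        have h1 := hpos (t + 1)
        have h2 := (hη (t + 1)).ne'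
        rw [hγ t, hβ t]
        field_simp
      rw [hz, ih, hx, hm, e]
      module
  have hy' : ∀ t, y t = x t := by
    intro t
    induction t with
    | zero => rw [hy0, hx0]
    | succ t ih =>
      have h1 := hpos (t + 1)
      have e : lam (t + 1) / (1 + lam (t + 1)) = 1 - 1 / (1 + lam (t + 1)) := by
        field_simp
        ring
      have e2 : γ t = (1 / (1 + lam (t + 1))) * η t := by
        rw [hγ t]
        ring
      rw [hy, ih, hz', hx, e, e2]
      module
  refine ⟨hy', fun t => ?_⟩
  rw [hc t]
  exact hz' t
end

section
/- Monotonicity of IAM iterates: if every f_ξ is convex, then for any realization of the samples the IAM iterates satisfy ‖z_t − x_*‖² ≤ ‖z_{t−1}−x_*‖² for all t ≥ 0 (hence ‖z_t − x_*‖ ≤ ‖x_0 − x_*‖), and also ‖x_t − x_*‖ ≤ ‖x_0 − x_*‖ for all t ≥ 0. -/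
open MeasureTheory
open scoped RealInnerProductSpace

/-- **Monotonicity of the IAM iterates.** If every loss `f_ξ` is convex, then for any
realization `(s_t)` of the samples, the IAM iterates satisfy
`‖z_t − x_*‖² ≤ ‖z_{t−1} − x_*‖²` for all `t ≥ 0` (hence `‖z_t − x_*‖ ≤ ‖x_0 − x_*‖`),
and also `‖x_t − x_*‖ ≤ ‖x_0 − x_*‖` for all `t ≥ 0`.
Here `Z t` denotes `z_{t−1}` (so `Z 0 = z_{−1} = x_0` and `Z (t+1) = z_t`). -/
theorem iam_iterates_monotone
    {d : ℕ} {S : Type*} [MeasurableSpace S] (P : Measure S) [IsProbabilityMeasure P]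
    (fxi : S → EuclideanSpace ℝ (Fin d) → ℝ)
    (gxi : S → EuclideanSpace ℝ (Fin d) → EuclideanSpace ℝ (Fin d))
    (hconv : ∀ s, ConvexOn ℝ Set.univ (fxi s))
    (hsubgrad : ∀ s x y, fxi s x + ⟪gxi s x, y - x⟫ ≤ fxi s y)
    (hfint : ∀ x, Integrable (fun s => fxi s x) P)
    (f : EuclideanSpace ℝ (Fin d) → ℝ) (hf : ∀ x, f x = ∫ s, fxi s x ∂P)
    (xstar : EuclideanSpace ℝ (Fin d)) (hmin : IsMinOn f Set.univ xstar)
    (lam : ℕ → ℝ) (hlam : ∀ t, 0 ≤ lam t)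
    -- a realization of the samples
    (samp : ℕ → S)
    (x0 : EuclideanSpace ℝ (Fin d))
    (x Z : ℕ → EuclideanSpace ℝ (Fin d))
    (η : ℕ → ℝ)
    (hx0 : x 0 = x0) (hZ0 : Z 0 = x0)
    (hη : ∀ t, η t =
      max (fxi (samp t) (x t) - fxi (samp t) xstar
            + ⟪gxi (samp t) (x t), Z t - x t⟫) 0 / ‖gxi (samp t) (x t)‖ ^ 2)
    (hZ : ∀ t, Z (t + 1) = Z t - η t • gxi (samp t) (x t))
    (hx : ∀ t, x (t + 1) =
      (lam (t + 1) / (1 + lam (t + 1))) • x t + (1 / (1 + lam (t + 1))) • Z (t + 1)) :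
    (∀ t, ‖Z (t + 1) - xstar‖ ^ 2 ≤ ‖Z t - xstar‖ ^ 2) ∧
      (∀ t, ‖Z t - xstar‖ ≤ ‖x0 - xstar‖) ∧
      (∀ t, ‖x t - xstar‖ ≤ ‖x0 - xstar‖) := by
  have h1 : ∀ t, ‖Z (t + 1) - xstar‖ ^ 2 ≤ ‖Z t - xstar‖ ^ 2 := by
    intro t
    have hs := hsubgrad (samp t) (x t) xstar
    have he := hη t
    rw [hZ t]
    generalize gxi (samp t) (x t) = g at *
    have e1 : Z t - η t • g - xstar = (Z t - xstar) - η t • g := by abel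
    have e2 : ⟪g, Z t - xstar⟫ = ⟪g, Z t - x t⟫ - ⟪g, xstar - x t⟫ := by
      rw [← inner_sub_right]
      congr 1
      abel
    rw [e1, norm_sub_sq_real, inner_smul_right, real_inner_comm, norm_smul, mul_pow,
      Real.norm_eq_abs, sq_abs]
    by_cases hg : g = 0
    · simp [hg]
    have hn : 0 < ‖g‖ ^ 2 := by positivity
    rw [eq_div_iff hn.ne'] at he
    set a := fxi (samp t) (x t) - fxi (samp t) xstar + ⟪g, Z t - x t⟫ with ha
    have hle : a ≤ ⟪g, Z t - xstar⟫ := by linarith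
    rcases le_total a 0 with h | h
    · rw [max_eq_right h] at he
      have h0 : η t = 0 := by
        rcases mul_eq_zero.mp he with h' | h'
        · exact h'
        · exact absurd h' hn.ne'
      simp [h0]
    · rw [max_eq_left h] at he
      have h0 : 0 ≤ η t := by
        by_contra hc
        push Not at hc
        have := mul_neg_of_neg_of_pos hc hn
        linarith
      have h2 : η t ^ 2 * ‖g‖ ^ 2 = η t * a := by rw [← he]; ring
      have h3 := mul_le_mul_of_nonneg_left hle h0
      have h4 := mul_nonneg h0 h
      linarith
  have h2 : ∀ t, ‖Z t - xstar‖ ≤ ‖x0 - xstar‖ := by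
    intro t
    induction t with
    | zero => rw [hZ0]
    | succ k ih =>
      exact (pow_le_pow_iff_left₀ (norm_nonneg _) (norm_nonneg _) two_ne_zero |>.mp (h1 k)).trans ih
  refine ⟨h1, h2, ?_⟩
  intro t
  induction t with
  | zero => rw [hx0]
  | succ k ih =>
    have hl := hlam (k + 1)
    have hp : 0 < 1 + lam (k + 1) := by linarith
    have hc := convex_closedBall xstar ‖x0 - xstar‖
    have hm := hc (mem_closedBall_iff_norm.mpr ih) (mem_closedBall_iff_norm.mpr (h2 (k + 1)))
      (div_nonneg hl hp.le) (div_nonneg zero_le_one hp.le) (by field_simp; ring)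
    rw [hx k]
    exact mem_closedBall_iff_norm.mp hm
end

section
/- Telescoping of the IAM numerator: consider the IAM iterates with λ_t = t (so λ_0 = 0, and z_{t−1} − x_t = −λ_t(x_{t−1} − x_t) for t ≥ 1, with the convention x_{−1} = x_0). Then for every k ≥ 0: ∑_{t=0}^{k} [f(x_t) − f(x_*) + ⟨g(x_t), z_{t−1} − x_t⟩] = (k+1)(f(x_k) − f(x_*)) + ∑_{t=1}^{k} λ_t·B_f(x_{t−1}, x_t), where g(x) is a subgradient of f at x and B_f(x,y) := f(x) − f(y) − ⟨g(y), x − y⟩; in particular B_f(x_{t−1}, x_t) ≥ 0 by convexity of f. -/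
open Finset
open scoped RealInnerProductSpace

/-- **Telescoping of the IAM numerator.** For the IAM iterates with `λ_t = t`
(so `z_{t−1} − x_t = −t (x_{t−1} − x_t)` for `t ≥ 1`, and `z_{−1} = x_0`), writing
`Z t := z_{t−1}`, one has for every `k ≥ 0`:
`∑_{t=0}^{k} [f(x_t) − f(x_*) + ⟪g(x_t), z_{t−1} − x_t⟫]
  = (k+1)(f(x_k) − f(x_*)) + ∑_{t=1}^{k} t · B_f(x_{t−1}, x_t)`,
where `B_f(x,y) = f(x) − f(y) − ⟪g(y), x − y⟫ ≥ 0` by convexity. -/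
theorem iam_numerator_telescoping
    {d : ℕ} (f : EuclideanSpace ℝ (Fin d) → ℝ)
    (g : EuclideanSpace ℝ (Fin d) → EuclideanSpace ℝ (Fin d))
    (hconv : ConvexOn ℝ Set.univ f)
    (hsubgrad : ∀ x y, f x + ⟪g x, y - x⟫ ≤ f y)
    (xstar : EuclideanSpace ℝ (Fin d)) (hmin : IsMinOn f Set.univ xstar)
    (x Z : ℕ → EuclideanSpace ℝ (Fin d))
    (hZ0 : Z 0 = x 0)
    (hZ : ∀ t : ℕ, Z (t + 1) - x (t + 1) = -(((t : ℝ) + 1) • (x t - x (t + 1)))) :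
    (∀ k : ℕ,
      ∑ t ∈ range (k + 1), (f (x t) - f xstar + ⟪g (x t), Z t - x t⟫)
        = ((k : ℝ) + 1) * (f (x k) - f xstar)
          + ∑ t ∈ range k, ((t : ℝ) + 1) *
              (f (x t) - f (x (t + 1)) - ⟪g (x (t + 1)), x t - x (t + 1)⟫)) ∧
      (∀ t : ℕ, 0 ≤ f (x t) - f (x (t + 1)) - ⟪g (x (t + 1)), x t - x (t + 1)⟫) := by
  refine ⟨fun k => ?_, fun t => ?_⟩
  · induction k with
    | zero => simp [hZ0]
    | succ k ih =>
      rw [sum_range_succ, ih, sum_range_succ _ k, hZ k, inner_neg_right, real_inner_smul_right]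
      push_cast
      ring
  · have h := hsubgrad (x (t + 1)) (x t)
    linarith
end
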